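/- arXiv:gr-qc/9909053 — 4 statements merged into one kernel-verified Lean document; each statement's English description precedes it below -/
import Mathlib

section
/- Define c : ℕ × ℕ → ℕ by c(0,0) = 1, c(0,p) = 0 for p ≥ 1, and for n ≥ 1, c(n,p) = c(n−1, p−1) + c(n−1, p+1), where the term c(n−1, −1) is taken to be 0 (so c(n,0) = c(n−1,1)). Then for all n, p ∈ ℕ: c(n,p) = (p+1)·n! / ( ((n−p)/2)! · ((n+p)/2 + 1)! ) whenever p ≤ n and n − p is even, and c(n,p) = 0 otherwise. -/
/-- The multiplicities `c n p` of the `(p+1)`-dimensional irreducible representation of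
SU(2) in the `n`-fold tensor power of the fundamental representation, defined by the
recursion `c 0 0 = 1`, `c 0 (p+1) = 0`, `c (n+1) 0 = c n 1`,
`c (n+1) (p+1) = c n p + c n (p+2)`. -/
def cMult : ℕ → ℕ → ℕ
  | 0, 0 => 1
  | 0, _ + 1 => 0
  | n + 1, 0 => cMult n 1
  | n + 1, p + 1 => cMult n p + cMult n (p + 2)

theorem cMult_zero_aux : ∀ n p : ℕ, (∀ k, n ≠ p + 2 * k) → cMult n p = 0 := by
  intro n
  induction n with
  | zero =>
    intro p h
    cases p with
    | zero => exact absurd rfl (h 0)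
    | succ p => simp [cMult]
  | succ n ih =>
    intro p h
    cases p with
    | zero =>
      rw [cMult]
      exact ih 1 (fun k hk => h (k + 1) (by omega))
    | succ p =>
      rw [cMult, ih p (fun k hk => h k (by omega)),
        ih (p + 2) (fun k hk => h (k + 1) (by omega))]

theorem cMult_formula_aux : ∀ n p k : ℕ, n = p + 2 * k →
    (cMult n p : ℚ) = (p + 1) * (n.factorial : ℚ) /
      ((k.factorial : ℚ) * ((p + k + 1).factorial : ℚ)) := by
  intro n
  induction n with
  | zero =>
    intro p k h
    obtain rfl : p = 0 := by omega
    obtain rfl : k = 0 := by omega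
    simp [cMult]
  | succ n ih =>
    intro p k h
    cases p with
    | zero =>
      obtain ⟨j, rfl⟩ : ∃ j, k = j + 1 := ⟨k - 1, by omega⟩
      have hn : (n : ℚ) = 1 + 2 * j := by
        have : n = 1 + 2 * j := by omega
        exact_mod_cast this
      rw [cMult, ih 1 j (by omega), show 0 + (j + 1) + 1 = 1 + j + 1 by omega,
        Nat.factorial_succ n, Nat.factorial_succ j]
      have h1 : (j.factorial : ℚ) ≠ 0 := by positivity
      have h2 : ((1 + j + 1).factorial : ℚ) ≠ 0 := by positivity
      have h3 : (j : ℚ) + 1 ≠ 0 := by positivity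
      push_cast
      rw [hn]
      field_simp
      ring
    | succ p =>
      cases k with
      | zero =>
        obtain rfl : n = p := by omega
        rw [cMult, cMult_zero_aux n (n + 2) (fun k hk => by omega)]
        push_cast
        rw [ih n 0 (by omega)]
        simp only [Nat.add_zero, Nat.factorial_succ, Nat.factorial_zero]
        have h1 : (n.factorial : ℚ) ≠ 0 := by positivity
        have h3 : (n : ℚ) + 1 ≠ 0 := by positivity
        have h4 : (n : ℚ) + 1 + 1 ≠ 0 := by positivity
        push_cast
        field_simp
        ring
      | succ j =>
        have hn : (n : ℚ) = p + 2 * j + 2 := by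
          have : n = p + 2 * j + 2 := by omega
          exact_mod_cast this
        rw [cMult]
        push_cast
        rw [ih p (j + 1) (by omega), ih (p + 2) j (by omega),
          show p + 2 + j + 1 = (p + j + 2) + 1 by omega,
          show p + 1 + (j + 1) + 1 = (p + j + 2) + 1 by omega,
          show p + (j + 1) + 1 = p + j + 2 by omega,
          Nat.factorial_succ n, Nat.factorial_succ j, Nat.factorial_succ (p + j + 2)]
        have h1 : (j.factorial : ℚ) ≠ 0 := by positivity
        have h2 : ((p + j + 2).factorial : ℚ) ≠ 0 := by positivity
        have h3 : (j : ℚ) + 1 ≠ 0 := by positivity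
        have h4 : (p : ℚ) + j + 2 + 1 ≠ 0 := by positivity
        push_cast
        rw [hn]
        field_simp
        ring

/-- Closed form for the SU(2) tensor-power multiplicities:
`c n p = (p+1)·n! / (((n−p)/2)!·((n+p)/2 + 1)!)` when `p ≤ n` and `n − p` is even,
and `c n p = 0` otherwise. -/
theorem stmt_7 :
    ∀ n p : ℕ,
      (p ≤ n ∧ Even (n - p) →
        (cMult n p : ℚ) =
          (p + 1) * (n.factorial : ℚ) /
            ((((n - p) / 2).factorial : ℚ) * (((n + p) / 2 + 1).factorial : ℚ))) ∧
      (¬(p ≤ n ∧ Even (n - p)) → cMult n p = 0) := by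
  intro n p
  constructor
  · rintro ⟨hp, k, hk⟩
    rw [cMult_formula_aux n p k (by omega), show (n - p) / 2 = k by omega,
      show (n + p) / 2 + 1 = p + k + 1 by omega]
  · intro h
    refine cMult_zero_aux n p (fun k hk => h ⟨by omega, k, by omega⟩)
end

section
/- Let c(n,p) be defined by the recursion c(0,0) = 1, c(0,p) = 0 for p ≥ 1, c(n,p) = c(n−1, p−1) + c(n−1, p+1) (with c(n−1,−1) := 0). Then for every p ∈ ℕ and every λ ∈ ℝ, the exponential generating function of the p-th column is ∑_{n=0}^{∞} c(n,p) λⁿ / n! = (p+1) · ∑_{k=0}^{∞} λ^{2k+p} / ( k! · (k+p+1)! ), both series converging absolutely. (The right-hand side equals ((p+1)/λ) I_{p+1}(2λ), where I_ν is the modified Bessel function of the first kind.) -/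
theorem cMult_zero_of (n : ℕ) : ∀ p : ℕ, (¬ ∃ k, 2 * k + p = n) → cMult n p = 0 := by
  induction n with
  | zero =>
    intro p h
    cases p with
    | zero => exact absurd ⟨0, rfl⟩ h
    | succ p => simp [cMult]
  | succ n ih =>
    intro p h
    cases p with
    | zero =>
      rw [cMult]
      apply ih
      rintro ⟨k, hk⟩
      exact h ⟨k + 1, by omega⟩
    | succ p =>
      rw [cMult, ih p, ih (p + 2)]
      · rintro ⟨k, hk⟩
        exact h ⟨k + 1, by omega⟩
      · rintro ⟨k, hk⟩
        exact h ⟨k, by omega⟩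

theorem cMult_closed (n : ℕ) : ∀ k p : ℕ, 2 * k + p = n →
    (cMult n p : ℝ) = (p + 1) * (n.factorial : ℝ) /
      ((k.factorial : ℝ) * ((k + p + 1).factorial : ℝ)) := by
  induction n with
  | zero =>
    intro k p h
    obtain rfl : k = 0 := by omega
    obtain rfl : p = 0 := by omega
    simp [cMult]
  | succ n ih =>
    intro k p h
    cases p with
    | zero =>
      obtain ⟨j, rfl⟩ : ∃ j, k = j + 1 := ⟨k - 1, by omega⟩
      obtain rfl : n = 2 * j + 1 := by omega
      rw [cMult, ih j 1 rfl]
      have h1 : (j.factorial : ℝ) ≠ 0 := by positivity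
      have h2 : (j : ℝ) + 1 ≠ 0 := by positivity
      have h3 : (j : ℝ) + 1 + 1 ≠ 0 := by positivity
      simp only [Nat.factorial_succ, Nat.add_zero]
      push_cast
      field_simp
      ring
    | succ q =>
      rw [cMult]
      cases k with
      | zero =>
        obtain rfl : n = q := by omega
        rw [cMult_zero_of n (n + 2) (by rintro ⟨k, hk⟩; omega)]
        push_cast
        rw [ih 0 n (by omega)]
        have h1 : (n.factorial : ℝ) ≠ 0 := by positivity
        have h2 : (n : ℝ) + 1 ≠ 0 := by positivity
        have h3 : (n : ℝ) + 1 + 1 ≠ 0 := by positivity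
        simp only [Nat.factorial_succ, Nat.zero_add, Nat.factorial_zero]
        push_cast
        field_simp
        ring
      | succ j =>
        obtain rfl : n = 2 * j + q + 2 := by omega
        push_cast
        rw [ih (j + 1) q (by omega), ih j (q + 2) (by omega)]
        have e1 : j + 1 + q + 1 = j + q + 2 := by omega
        have e2 : j + (q + 2) + 1 = j + q + 2 + 1 := by omega
        have e3 : j + 1 + (q + 1) + 1 = j + q + 2 + 1 := by omega
        rw [e1, e2, e3, Nat.factorial_succ j, Nat.factorial_succ (j + q + 2),
          Nat.factorial_succ (2 * j + q + 2)]
        have h1 : (j.factorial : ℝ) ≠ 0 := by positivity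
        have h4 : ((j + q + 2).factorial : ℝ) ≠ 0 := by positivity
        have h2 : (j : ℝ) + 1 ≠ 0 := by positivity
        have h3 : (j : ℝ) + q + 2 + 1 ≠ 0 := by positivity
        push_cast
        field_simp
        ring

theorem bessel_summable (p : ℕ) (x : ℝ) :
    Summable (fun k : ℕ => |x ^ (2 * k + p) / ((k.factorial : ℝ) * ((k + p + 1).factorial : ℝ))|) := by
  have hs := (Real.summable_pow_div_factorial (x ^ 2)).mul_left (|x| ^ p)
  refine Summable.of_nonneg_of_le (fun _ => abs_nonneg _) (fun k => ?_) hs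
  have h1 : (0 : ℝ) < k.factorial := by positivity
  have h2 : (1 : ℝ) ≤ ((k + p + 1).factorial : ℝ) := by
    exact_mod_cast Nat.succ_le_of_lt (Nat.factorial_pos _)
  rw [abs_div, abs_pow, abs_of_pos (by positivity : (0 : ℝ) < (k.factorial : ℝ) * ((k + p + 1).factorial : ℝ)),
    pow_add, pow_mul, sq_abs, mul_comm (|x| ^ p), div_mul_eq_mul_div]
  gcongr
  exact le_mul_of_one_le_right h1.le h2

/-- Exponential generating function of the `p`-th column of the multiplicities:
`∑ₙ c(n,p) λⁿ/n! = (p+1) ∑ₖ λ^{2k+p}/(k!(k+p+1)!)`, both series converging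
absolutely (the right-hand side equals `((p+1)/λ) I_{p+1}(2λ)`). -/
theorem stmt_9 :
    ∀ (p : ℕ) (lam : ℝ),
      Summable (fun n : ℕ => |(cMult n p : ℝ) * lam ^ n / (n.factorial : ℝ)|) ∧
      Summable (fun k : ℕ =>
        |lam ^ (2 * k + p) / ((k.factorial : ℝ) * ((k + p + 1).factorial : ℝ))|) ∧
      ∑' n : ℕ, (cMult n p : ℝ) * lam ^ n / (n.factorial : ℝ) =
        (p + 1) *
          ∑' k : ℕ, lam ^ (2 * k + p) / ((k.factorial : ℝ) * ((k + p + 1).factorial : ℝ)) := by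
  intro p lam
  have hB := bessel_summable p lam
  have hinj : Function.Injective (fun k : ℕ => 2 * k + p) := by
    intro a b h
    simp only at h
    omega
  have hz : ∀ n ∉ Set.range (fun k : ℕ => 2 * k + p),
      (cMult n p : ℝ) * lam ^ n / (n.factorial : ℝ) = 0 := by
    intro n hn
    rw [cMult_zero_of n p (by simpa using hn)]
    simp
  have hc : ∀ k : ℕ, (cMult (2 * k + p) p : ℝ) * lam ^ (2 * k + p) / ((2 * k + p).factorial : ℝ) =
      (p + 1) * (lam ^ (2 * k + p) / ((k.factorial : ℝ) * ((k + p + 1).factorial : ℝ))) := by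
    intro k
    rw [cMult_closed (2 * k + p) k p rfl]
    have h1 : (k.factorial : ℝ) ≠ 0 := by positivity
    have h2 : ((k + p + 1).factorial : ℝ) ≠ 0 := by positivity
    have h3 : ((2 * k + p).factorial : ℝ) ≠ 0 := by positivity
    field_simp
  have hS := (hB.of_abs.hasSum.mul_left ((p : ℝ) + 1))
  simp only [← hc] at hS
  have hT := (hinj.hasSum_iff hz).1 hS
  exact ⟨hT.summable.abs, hB, hT.tsum_eq⟩
end

section
/- For every λ ∈ ℝ and p ∈ ℕ set B_p(λ) = ∑_{k=0}^{∞} λ^{2k+p} / ( k! · (k+p)! ). Then ∑_{p=0}^{∞} ( B_p(λ) − B_{p+2}(λ) )² = B_0(2λ) − B_2(2λ), the left-hand series converging absolutely. (In Bessel-function notation: ∑_{p=0}^{∞} ( I_p(2λ) − I_{p+2}(2λ) )² = I_0(4λ) − I_2(4λ); this is the identity showing that the normalisation constant of the quasi-coherent weave coefficients s_p(λ) = N(λ)(I_p(2λ) − I_{p+2}(2λ)) is N(λ) = (I_0(4λ) − I_2(4λ))^{−1/2}, i.e. that ∑_p s_p(λ)² = 1.) -/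
/-- `besselB p lam = ∑ₖ lam^{2k+p}/(k!(k+p)!)`, i.e. `I_p(2·lam)` where `I_p` is the
modified Bessel function of the first kind of order `p`. -/
noncomputable def besselB (p : ℕ) (lam : ℝ) : ℝ :=
  ∑' k : ℕ, lam ^ (2 * k + p) / ((k.factorial : ℝ) * ((k + p).factorial : ℝ))

/-- Number of nearest-neighbour paths on the integers of length `n` from `0` to `p`. -/
def pathC : ℕ → ℕ → ℝ
  | 0, 0 => 1
  | 0, _ + 1 => 0
  | n + 1, 0 => 2 * pathC n 1
  | n + 1, p + 1 => pathC n p + pathC n (p + 2)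

/-- Number of nearest-neighbour paths on the naturals of length `n` from `0` to `p`. -/
def pathA : ℕ → ℕ → ℝ
  | 0, 0 => 1
  | 0, _ + 1 => 0
  | n + 1, 0 => pathA n 1
  | n + 1, p + 1 => pathA n p + pathA n (p + 2)

lemma pathA_eq (n : ℕ) : ∀ p, pathA n p = pathC n p - pathC n (p + 2) := by
  induction n with
  | zero => intro p; cases p <;> simp [pathA, pathC]
  | succ n ih =>
    intro p
    cases p with
    | zero => simp only [pathA, pathC, ih]; ring
    | succ p => simp only [pathA, pathC, ih]; ring

lemma pathA_bd (n : ℕ) : ∀ p, 0 ≤ pathA n p ∧ pathA n p ≤ 2 ^ n := by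
  induction n with
  | zero => intro p; cases p <;> simp [pathA]
  | succ n ih =>
    intro p
    have h2 : (0:ℝ) < 2 ^ n := by positivity
    cases p with
    | zero =>
      simp only [pathA, pow_succ]
      have := ih 1
      constructor <;> linarith [this.1, this.2]
    | succ p =>
      simp only [pathA, pow_succ]
      have h1 := ih p
      have h3 := ih (p + 2)
      constructor <;> linarith [h1.1, h1.2, h3.1, h3.2]

lemma pathC_bd (n : ℕ) : ∀ p, 0 ≤ pathC n p ∧ pathC n p ≤ 2 ^ n := by
  induction n with
  | zero => intro p; cases p <;> simp [pathC]
  | succ n ih =>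
    intro p
    have h2 : (0:ℝ) < 2 ^ n := by positivity
    cases p with
    | zero =>
      simp only [pathC, pow_succ]
      have := ih 1
      constructor <;> linarith [this.1, this.2]
    | succ p =>
      simp only [pathC, pow_succ]
      have h1 := ih p
      have h3 := ih (p + 2)
      constructor <;> linarith [h1.1, h1.2, h3.1, h3.2]

lemma pathA_zero (n : ℕ) : ∀ p, n < p → pathA n p = 0 := by
  induction n with
  | zero => intro p hp; cases p <;> simp_all [pathA]
  | succ n ih =>
    intro p hp
    cases p with
    | zero => omega
    | succ p => simp only [pathA]; rw [ih p (by omega), ih (p + 2) (by omega)]; simp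

lemma pathC_zero (n : ℕ) : ∀ p, (∀ k, 2 * k + p ≠ n) → pathC n p = 0 := by
  induction n with
  | zero =>
    intro p hp
    cases p with
    | zero => exact absurd rfl (hp 0)
    | succ p => simp [pathC]
  | succ n ih =>
    intro p hp
    cases p with
    | zero =>
      simp only [pathC]
      rw [ih 1 (fun k hk => hp (k + 1) (by omega))]; simp
    | succ p =>
      simp only [pathC]
      rw [ih p (fun k hk => hp k (by omega)), ih (p + 2) (fun k hk => hp (k + 1) (by omega))]; simp

lemma pathC_val (n : ℕ) : ∀ k p, 2 * k + p = n →
    pathC n p * ((k.factorial : ℝ) * ((k + p).factorial : ℝ)) = (n.factorial : ℝ) := by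
  induction n with
  | zero =>
    intro k p h
    obtain rfl : k = 0 := by omega
    obtain rfl : p = 0 := by omega
    simp [pathC]
  | succ n ih =>
    intro k p h
    have hn : ((n + 1 : ℕ) : ℝ) = 2 * k + p := by rw [← h]; push_cast; ring
    cases p with
    | zero =>
      cases k with
      | zero => omega
      | succ k =>
        have h1 := ih k 1 (by omega)
        simp only [pathC, add_zero]
        rw [Nat.factorial_succ n, Nat.cast_mul, hn, ← h1, Nat.factorial_succ k]
        push_cast; ring
    | succ p =>
      simp only [pathC]
      have h1 := ih k p (by omega)
      have e : k + (p + 1) = (k + p) + 1 := by ring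
      rw [Nat.factorial_succ n, Nat.cast_mul, hn]
      cases k with
      | zero =>
        rw [pathC_zero n (p + 2) (fun k hk => by omega), e, Nat.factorial_succ, ← h1]
        push_cast; ring
      | succ k =>
        have h2 := ih k (p + 2) (by omega)
        have e2 : k + 1 + p + 1 = k + (p + 2) := by ring
        have h3 : ((k + (p + 2)).factorial : ℝ) = (k + p + 2) * ((k + 1 + p).factorial : ℝ) := by
          rw [← e2, Nat.factorial_succ]; push_cast; ring
        rw [e, e2, h3]
        rw [h3] at h2
        have h4 : ((k + 1).factorial : ℝ) = (k + 1) * (k.factorial : ℝ) := by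
          rw [Nat.factorial_succ]; push_cast; ring
        rw [h4] at h1 ⊢
        push_cast
        linear_combination (k + p + 2 : ℝ) * h1 + (k + 1 : ℝ) * h2

lemma summable_of_bd (lam : ℝ) (c : ℕ → ℝ) (h : ∀ n, 0 ≤ c n ∧ c n ≤ 2 ^ n) :
    Summable (fun n : ℕ => ‖lam ^ n / (n.factorial : ℝ) * c n‖) := by
  refine Summable.of_nonneg_of_le (fun n => norm_nonneg _) (fun n => ?_)
    (Real.summable_pow_div_factorial (2 * |lam|))
  rw [norm_mul, norm_div, norm_pow, Real.norm_eq_abs, Real.norm_eq_abs, Real.norm_eq_abs,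
    abs_of_nonneg (h n).1, Nat.abs_cast, mul_pow]
  have h1 : 0 ≤ |lam| ^ n / (n.factorial : ℝ) := by positivity
  calc _ ≤ |lam| ^ n / (n.factorial : ℝ) * 2 ^ n := mul_le_mul_of_nonneg_left (h n).2 h1
    _ = _ := by ring

lemma besselB_eq (p : ℕ) (lam : ℝ) :
    besselB p lam = ∑' n : ℕ, lam ^ n / (n.factorial : ℝ) * pathC n p := by
  have hinj : Function.Injective (fun k : ℕ => 2 * k + p) := fun a b h => by
    simp only at h; omega
  rw [← hinj.tsum_eq (f := fun n : ℕ => lam ^ n / (n.factorial : ℝ) * pathC n p)]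
  · unfold besselB
    refine tsum_congr fun k => ?_
    have h := pathC_val (2 * k + p) k p rfl
    have h1 : (k.factorial : ℝ) ≠ 0 := by positivity
    have h2 : ((k + p).factorial : ℝ) ≠ 0 := by positivity
    have h3 : ((2 * k + p).factorial : ℝ) ≠ 0 := by positivity
    rw [div_mul_eq_mul_div, div_eq_div_iff (mul_ne_zero h1 h2) h3, ← h]
    ring
  · intro n hn
    by_contra hc
    apply hn
    simp only
    rw [pathC_zero n p (fun k hk => hc ⟨k, hk⟩), mul_zero]

lemma besselB_sub (p : ℕ) (lam : ℝ) :
    besselB p lam - besselB (p + 2) lam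
      = ∑' n : ℕ, lam ^ n / (n.factorial : ℝ) * pathA n p := by
  rw [besselB_eq, besselB_eq, ← Summable.tsum_sub]
  · exact tsum_congr fun n => by rw [pathA_eq]; ring
  · exact (summable_of_bd lam (fun n => pathC n p) (fun n => pathC_bd n p)).of_norm
  · exact (summable_of_bd lam (fun n => pathC n (p + 2)) (fun n => pathC_bd n _)).of_norm

lemma pathA_boundary (n m q : ℕ) :
    ∑ p ∈ Finset.range (q + 1), pathA (n + 1) p * pathA m p
      - ∑ p ∈ Finset.range (q + 1), pathA n p * pathA (m + 1) p
      = pathA n (q + 1) * pathA m q - pathA n q * pathA m (q + 1) := by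
  induction q with
  | zero => simp [pathA]
  | succ q ih =>
    rw [Finset.sum_range_succ _ (q + 1), Finset.sum_range_succ _ (q + 1)]
    simp only [pathA]
    linear_combination ih

lemma pathA_sum (n : ℕ) : ∀ m q, n + m ≤ q →
    ∑ p ∈ Finset.range (q + 1), pathA n p * pathA m p = pathA (n + m) 0 := by
  induction n with
  | zero =>
    intro m q h
    rw [Finset.sum_range_succ']
    simp [pathA]
  | succ n ih =>
    intro m q h
    have h1 := pathA_boundary n m q
    rw [ih (m + 1) q (by omega), pathA_zero n (q + 1) (by omega), pathA_zero m (q + 1) (by omega)] at h1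
    rw [show n + 1 + m = n + (m + 1) by ring]
    linarith

lemma pathA_hasSum (n m : ℕ) : HasSum (fun p => pathA n p * pathA m p) (pathA (n + m) 0) := by
  rw [← pathA_sum n m (n + m) le_rfl]
  apply hasSum_sum_of_ne_finset_zero
  intro p hp
  simp only [Finset.mem_range, not_lt] at hp
  rw [pathA_zero n p (by omega), zero_mul]

lemma triple_hasSum (lam : ℝ) (z : ℕ × ℕ) :
    HasSum (fun p => (lam ^ z.1 / (z.1.factorial : ℝ) * pathA z.1 p) *
      (lam ^ z.2 / (z.2.factorial : ℝ) * pathA z.2 p))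
      (lam ^ z.1 / (z.1.factorial : ℝ) * (lam ^ z.2 / (z.2.factorial : ℝ)) *
        pathA (z.1 + z.2) 0) := by
  have := (pathA_hasSum z.1 z.2).mul_left
    (lam ^ z.1 / (z.1.factorial : ℝ) * (lam ^ z.2 / (z.2.factorial : ℝ)))
  have e : (fun p => (lam ^ z.1 / (z.1.factorial : ℝ) * pathA z.1 p) *
      (lam ^ z.2 / (z.2.factorial : ℝ) * pathA z.2 p)) = fun p =>
      lam ^ z.1 / (z.1.factorial : ℝ) * (lam ^ z.2 / (z.2.factorial : ℝ)) *
        (pathA z.1 p * pathA z.2 p) := by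
    funext p; ring
  rw [e]
  exact this

lemma triple_summable_pair (lam : ℝ) :
    Summable (fun z : ℕ × ℕ => ‖lam ^ z.1 / (z.1.factorial : ℝ) *
      (lam ^ z.2 / (z.2.factorial : ℝ)) * pathA (z.1 + z.2) 0‖) := by
  have h := Real.summable_pow_div_factorial (2 * |lam|)
  have h2 := h.mul_of_nonneg h (fun n => by positivity) (fun n => by positivity)
  refine Summable.of_nonneg_of_le (fun n => norm_nonneg _) (fun z => ?_) h2
  have hb := pathA_bd (z.1 + z.2) 0
  rw [norm_mul, Real.norm_eq_abs, Real.norm_eq_abs, abs_of_nonneg hb.1, abs_mul, abs_div, abs_div,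
    abs_pow, abs_pow, Nat.abs_cast, Nat.abs_cast]
  calc _ ≤ |lam| ^ z.1 / (z.1.factorial : ℝ) * (|lam| ^ z.2 / (z.2.factorial : ℝ))
        * 2 ^ (z.1 + z.2) := mul_le_mul_of_nonneg_left hb.2 (by positivity)
    _ = _ := by rw [mul_pow, mul_pow, pow_add]; ring

lemma triple_summable (lam : ℝ) :
    Summable (fun y : (ℕ × ℕ) × ℕ => (lam ^ y.1.1 / (y.1.1.factorial : ℝ) * pathA y.1.1 y.2) *
      (lam ^ y.1.2 / (y.1.2.factorial : ℝ) * pathA y.1.2 y.2)) := by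
  have e : ∀ y : (ℕ × ℕ) × ℕ, ‖(lam ^ y.1.1 / (y.1.1.factorial : ℝ) * pathA y.1.1 y.2) *
      (lam ^ y.1.2 / (y.1.2.factorial : ℝ) * pathA y.1.2 y.2)‖
      = (|lam| ^ y.1.1 / (y.1.1.factorial : ℝ) * pathA y.1.1 y.2) *
      (|lam| ^ y.1.2 / (y.1.2.factorial : ℝ) * pathA y.1.2 y.2) := by
    intro y
    rw [Real.norm_eq_abs, abs_mul, abs_mul, abs_mul, abs_div, abs_div, abs_pow, abs_pow,
      Nat.abs_cast, Nat.abs_cast, abs_of_nonneg (pathA_bd _ _).1, abs_of_nonneg (pathA_bd _ _).1]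
  apply Summable.of_norm
  rw [summable_congr e, summable_prod_of_nonneg (fun y => (norm_nonneg _).trans_eq (e y))]
  refine ⟨fun z => (triple_hasSum |lam| z).summable, ?_⟩
  simp only [(triple_hasSum |lam| _).tsum_eq]
  exact (triple_summable_pair |lam|).of_norm

lemma antidiag_sum (lam : ℝ) (N : ℕ) :
    ∑ z ∈ Finset.HasAntidiagonal.antidiagonal N, lam ^ z.1 / (z.1.factorial : ℝ) *
      (lam ^ z.2 / (z.2.factorial : ℝ)) * pathA (z.1 + z.2) 0
      = (2 * lam) ^ N / (N.factorial : ℝ) * pathA N 0 := by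
  rw [two_mul, (Commute.all lam lam).add_pow', Finset.sum_div, Finset.sum_mul]
  refine Finset.sum_congr rfl fun z hz => ?_
  rw [Finset.HasAntidiagonal.mem_antidiagonal] at hz
  subst hz
  rw [nsmul_eq_mul, Nat.cast_add_choose]
  have h3 : ((z.1 + z.2).factorial : ℝ) ≠ 0 := by positivity
  field_simp

lemma pair_hasSum (lam : ℝ) :
    ∑' z : ℕ × ℕ, lam ^ z.1 / (z.1.factorial : ℝ) *
      (lam ^ z.2 / (z.2.factorial : ℝ)) * pathA (z.1 + z.2) 0
      = ∑' N : ℕ, (2 * lam) ^ N / (N.factorial : ℝ) * pathA N 0 := by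
  have hs := (triple_summable_pair lam).of_norm
  rw [← Finset.HasAntidiagonal.sigmaAntidiagonalEquivProd.tsum_eq]
  refine (Summable.tsum_sigma' (fun n => (hasSum_fintype _).summable)
    (Finset.HasAntidiagonal.sigmaAntidiagonalEquivProd.summable_iff.mpr hs)).trans ?_
  refine tsum_congr fun N => ?_
  rw [tsum_fintype, ← antidiag_sum]
  exact Finset.sum_coe_sort (Finset.HasAntidiagonal.antidiagonal N) (fun z => lam ^ z.1 / (z.1.factorial : ℝ) *
      (lam ^ z.2 / (z.2.factorial : ℝ)) * pathA (z.1 + z.2) 0)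

/-- Normalisation identity for the quasi-coherent weave coefficients:
`∑ₚ (I_p(2λ) − I_{p+2}(2λ))² = I_0(4λ) − I_2(4λ)`, the series converging absolutely. -/
theorem stmt_11 :
    ∀ lam : ℝ,
      Summable (fun p : ℕ => (besselB p lam - besselB (p + 2) lam) ^ 2) ∧
      ∑' p : ℕ, (besselB p lam - besselB (p + 2) lam) ^ 2 =
        besselB 0 (2 * lam) - besselB 2 (2 * lam) := by
  intro lam
  have hT := triple_summable lam
  have hp : ∀ p, (besselB p lam - besselB (p + 2) lam) ^ 2 =
      ∑' z : ℕ × ℕ, (lam ^ z.1 / (z.1.factorial : ℝ) * pathA z.1 p) *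
      (lam ^ z.2 / (z.2.factorial : ℝ) * pathA z.2 p) := by
    intro p
    have h := summable_of_bd lam (fun n => pathA n p) (fun n => pathA_bd n p)
    rw [besselB_sub, sq, tsum_mul_tsum_of_summable_norm h h]
  have h0 := besselB_sub 0 (2 * lam)
  rw [zero_add] at h0
  simp only [hp]
  refine ⟨hT.prod_symm.prod, ?_⟩
  rw [h0, ← pair_hasSum]
  rw [Summable.tsum_comm (f := fun (z : ℕ × ℕ) (p : ℕ) =>
    (lam ^ z.1 / (z.1.factorial : ℝ) * pathA z.1 p) *
      (lam ^ z.2 / (z.2.factorial : ℝ) * pathA z.2 p)) hT]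
  exact tsum_congr fun z => (triple_hasSum lam z).tsum_eq
end

section
/- For every λ ∈ ℝ and p ∈ ℕ set B_p(λ) = ∑_{k=0}^{∞} λ^{2k+p} / ( k! · (k+p)! ), and let U_p denote the Chebyshev polynomials of the second kind. Then for all real λ and all real x, exp(2λx) = ∑_{p=0}^{∞} ( B_p(λ) − B_{p+2}(λ) ) · U_p(x), the series converging absolutely. (This is the expansion of the quasi-coherent weave function exp(λ(Tr g − 2)), g ∈ SU(2) with Tr g = 2x, into SU(2) characters with Bessel-function coefficients I_p(2λ) − I_{p+2}(2λ).) -/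
open Polynomial in
theorem U_binom (x : ℝ) (N : ℕ) : ∀ j : ℤ,
    ∑ ij ∈ Finset.HasAntidiagonal.antidiagonal N, (N.choose ij.1 : ℝ) *
      (Chebyshev.U ℝ (j + ((ij.1 : ℤ) - (ij.2 : ℤ)))).eval x
      = (2 * x) ^ N * (Chebyshev.U ℝ j).eval x := by
  induction N with
  | zero => intro j; simp
  | succ N ih =>
    intro j
    have h := Finset.sum_antidiagonal_choose_succ_mul
      (fun a b : ℕ => (Chebyshev.U ℝ (j + ((a : ℤ) - (b : ℤ)))).eval x) N
    rw [h]
    have h1 := ih (j - 1)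
    have h2 := ih (j + 1)
    have e1 : ∑ ij ∈ Finset.HasAntidiagonal.antidiagonal N, (N.choose ij.1 : ℝ) *
        (Chebyshev.U ℝ (j + ((ij.1 : ℤ) - ((ij.2 + 1 : ℕ) : ℤ)))).eval x
        = (2 * x) ^ N * (Chebyshev.U ℝ (j - 1)).eval x := by
      rw [← h1]
      refine Finset.sum_congr rfl fun ij _ => ?_
      congr 3
      push_cast; ring
    have e2 : ∑ ij ∈ Finset.HasAntidiagonal.antidiagonal N, (N.choose ij.2 : ℝ) *
        (Chebyshev.U ℝ (j + (((ij.1 + 1 : ℕ) : ℤ) - (ij.2 : ℤ)))).eval x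
        = (2 * x) ^ N * (Chebyshev.U ℝ (j + 1)).eval x := by
      rw [← h2]
      refine Finset.sum_congr rfl fun ij hij => ?_
      have : N.choose ij.2 = N.choose ij.1 :=
        (Nat.choose_symm_of_eq_add (Finset.HasAntidiagonal.mem_antidiagonal.mp hij).symm).symm
      rw [this]
      congr 3
      push_cast; ring
    rw [e1, e2, Chebyshev.U_add_one]
    simp
    ring

open Polynomial in
theorem U_bound_nat (x : ℝ) (n : ℕ) :
    |(Chebyshev.U ℝ (n : ℤ)).eval x| ≤ (2 * |x| + 1) ^ n ∧
    |(Chebyshev.U ℝ ((n : ℤ) + 1)).eval x| ≤ (2 * |x| + 1) ^ (n + 1) := by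
  induction n with
  | zero => simp [abs_mul]
  | succ n ih =>
    obtain ⟨h1, h2⟩ := ih
    refine ⟨by push_cast; exact h2, ?_⟩
    have e : (((n + 1 : ℕ) : ℤ) + 1) = (n : ℤ) + 2 := by push_cast; ring
    rw [e, Chebyshev.U_add_two]
    simp only [eval_sub, eval_mul, eval_X, eval_ofNat]
    set C := 2 * |x| + 1 with hC
    have hx := abs_nonneg x
    have hC1 : 1 ≤ C := by linarith
    have hp : C ^ n ≤ C ^ (n + 1) := pow_le_pow_right₀ hC1 (by omega)
    calc _ ≤ |2 * x * (Chebyshev.U ℝ ((n : ℤ) + 1)).eval x| + |(Chebyshev.U ℝ (n : ℤ)).eval x| :=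
          abs_sub _ _
      _ ≤ 2 * |x| * C ^ (n + 1) + C ^ (n + 1) := by
          rw [abs_mul, abs_mul, abs_two]
          gcongr
          exact h1.trans hp
      _ = C ^ (n + 1 + 1) := by rw [pow_succ C (n + 1), hC]; ring

open Polynomial in
theorem U_bound (x : ℝ) (m n : ℕ) :
    |(Chebyshev.U ℝ ((m : ℤ) - (n : ℤ))).eval x| ≤ (2 * |x| + 1) ^ (m + n) := by
  have hC1 : 1 ≤ 2 * |x| + 1 := by linarith [abs_nonneg x]
  rcases le_or_gt n m with h | h
  · obtain ⟨k, rfl⟩ := Nat.exists_eq_add_of_le h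
    have e : (((n + k : ℕ) : ℤ) - (n : ℤ)) = (k : ℤ) := by push_cast; ring
    rw [e]
    exact (U_bound_nat x k).1.trans (pow_le_pow_right₀ hC1 (by omega))
  · obtain ⟨k, rfl⟩ := Nat.exists_eq_add_of_lt h
    have e : ((m : ℤ) - ((m + k + 1 : ℕ) : ℤ)) = -(k : ℤ) - 1 := by push_cast; ring
    rw [e, Chebyshev.U_neg_sub_one]
    rcases k with _ | k
    · simp; positivity
    · have e : (((k + 1 : ℕ) : ℤ) - 1) = (k : ℤ) := by push_cast; ring
      rw [e, eval_neg, abs_neg]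
      exact (U_bound_nat x k).1.trans (pow_le_pow_right₀ hC1 (by omega))

noncomputable def wF (lam x : ℝ) (q : ℕ × ℕ) : ℝ :=
  lam ^ (q.1 + q.2) / ((q.1.factorial : ℝ) * (q.2.factorial : ℝ)) *
    (Polynomial.Chebyshev.U ℝ ((q.1 : ℤ) - (q.2 : ℤ))).eval x

theorem wF_summable (lam x : ℝ) : Summable (wF lam x) := by
  have hs := Real.summable_pow_div_factorial (|lam| * (2 * |x| + 1))
  have hp := hs.mul_of_nonneg hs (fun n => by positivity) (fun n => by positivity)
  refine Summable.of_norm_bounded hp fun q => ?_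
  rw [Real.norm_eq_abs, wF, abs_mul, abs_div, abs_pow]
  calc _ ≤ |lam| ^ (q.1 + q.2) / |(q.1.factorial : ℝ) * (q.2.factorial : ℝ)| *
        (2 * |x| + 1) ^ (q.1 + q.2) := by
        gcongr; exact U_bound x q.1 q.2
    _ = _ := by
        rw [abs_of_nonneg (by positivity : (0 : ℝ) ≤ (q.1.factorial : ℝ) * (q.2.factorial : ℝ)), mul_pow, mul_pow, pow_add, pow_add]
        field_simp

theorem wF_tsum (lam x : ℝ) : HasSum (wF lam x) (Real.exp (2 * lam * x)) := by
  have hs := wF_summable lam x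
  have h1 := (Finset.HasAntidiagonal.sigmaAntidiagonalEquivProd (A := ℕ)).hasSum_iff.mpr hs.hasSum
  have h2 := h1.sigma (fun n => hasSum_fintype _)
  have h3 : HasSum (fun n : ℕ => (2 * lam * x) ^ n / (n.factorial : ℝ))
      (Real.exp (2 * lam * x)) := by
    rw [Real.exp_eq_exp_ℝ]
    exact NormedSpace.expSeries_div_hasSum_exp (2 * lam * x)
  have h4 : (fun n : ℕ => ∑ c : Finset.HasAntidiagonal.antidiagonal n,
      (wF lam x ∘ Finset.HasAntidiagonal.sigmaAntidiagonalEquivProd) ⟨n, c⟩)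
      = fun n : ℕ => (2 * lam * x) ^ n / (n.factorial : ℝ) := by
    funext n
    have hb := U_binom x n 0
    simp only [zero_add, Polynomial.Chebyshev.U_zero, Polynomial.eval_one, mul_one] at hb
    have : (∑ c : Finset.HasAntidiagonal.antidiagonal n,
      (wF lam x ∘ Finset.HasAntidiagonal.sigmaAntidiagonalEquivProd) ⟨n, c⟩)
      = ∑ c ∈ Finset.HasAntidiagonal.antidiagonal n, wF lam x c := by
      rw [← Finset.sum_coe_sort (Finset.HasAntidiagonal.antidiagonal n) (wF lam x)]
      rfl
    rw [this]
    have e : (2 * lam * x) ^ n / (n.factorial : ℝ) = lam ^ n / n.factorial * (2 * x) ^ n := by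
      rw [mul_right_comm, mul_pow _ lam]; ring
    rw [e, ← hb, Finset.mul_sum]
    refine Finset.sum_congr rfl fun ij hij => ?_
    have hij' := Finset.HasAntidiagonal.mem_antidiagonal.mp hij
    subst hij'
    rw [wF, Nat.cast_add_choose]
    field_simp
  rw [h4] at h2
  rw [← h2.unique h3]
  exact hs.hasSum

def wI (q : ℕ × ℕ) : ℕ × ℕ := (q.2 + q.1, q.2)
def wJ (q : ℕ × ℕ) : ℕ × ℕ := (q.2, q.2 + (q.1 + 1))

theorem wI_inj : Function.Injective wI := by
  rintro ⟨a, b⟩ ⟨c, d⟩ h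
  simp only [wI, Prod.mk.injEq] at h ⊢
  omega

theorem wJ_inj : Function.Injective wJ := by
  rintro ⟨a, b⟩ ⟨c, d⟩ h
  simp only [wJ, Prod.mk.injEq] at h ⊢
  omega

theorem wIJ_compl : IsCompl (Set.range wI) (Set.range wJ) := by
  constructor
  · rw [Set.disjoint_left]
    rintro _ ⟨⟨a, b⟩, rfl⟩ ⟨⟨c, d⟩, h⟩
    simp only [wI, wJ, Prod.mk.injEq] at h
    omega
  · rw [codisjoint_iff_le_sup, top_le_iff]
    refine Set.eq_univ_iff_forall.mpr ?_
    rintro ⟨m, n⟩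
    rcases le_or_gt n m with h | h
    · left
      refine ⟨(m - n, n), ?_⟩
      have e : n + (m - n) = m := by omega
      simp [wI, e]
    · right
      refine ⟨(n - m - 1, m), ?_⟩
      have e : m + (n - m - 1 + 1) = n := by omega
      simp [wJ, e]

theorem besselB_summable (lam : ℝ) (p : ℕ) : Summable (fun k : ℕ =>
    lam ^ (2 * k + p) / ((k.factorial : ℝ) * ((k + p).factorial : ℝ))) := by
  have hs := Real.summable_pow_div_factorial (lam ^ 2)
  refine Summable.of_norm_bounded (hs.norm.mul_left (|lam| ^ p)) fun k => ?_
  rw [Real.norm_eq_abs, Real.norm_eq_abs, abs_div, abs_div, abs_pow, abs_pow, abs_mul, Nat.abs_cast,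
    Nat.abs_cast, pow_add, pow_mul, mul_comm, ← abs_pow, mul_div_assoc]
  have : (1 : ℝ) ≤ ((k + p).factorial : ℝ) := by exact_mod_cast Nat.succ_le_of_lt (Nat.factorial_pos _)
  gcongr
  · simp
  · exact le_mul_of_one_le_right (by positivity) this

open Polynomial in
theorem stmt_aux (lam x : ℝ) : HasSum (fun p : ℕ =>
    (besselB p lam - besselB (p + 2) lam) * (Chebyshev.U ℝ (p : ℤ)).eval x)
    (Real.exp (2 * lam * x)) := by
  have hs := wF_summable lam x
  have sI : Summable (wF lam x ∘ wI) := hs.comp_injective wI_inj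
  have sJ : Summable (wF lam x ∘ wJ) := hs.comp_injective wJ_inj
  have hI := wI_inj.hasSum_range_iff.mpr sI.hasSum
  have hJ := wJ_inj.hasSum_range_iff.mpr sJ.hasSum
  have hadd := (HasSum.add_isCompl (f := wF lam x) wIJ_compl hI hJ).unique (wF_tsum lam x)
  have fI : ∀ p : ℕ, HasSum (fun k => (wF lam x ∘ wI) (p, k))
      (besselB p lam * (Chebyshev.U ℝ (p : ℤ)).eval x) := by
    intro p
    have h : HasSum _ (besselB p lam * _) := (besselB_summable lam p).hasSum.mul_right ((Chebyshev.U ℝ (p : ℤ)).eval x)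
    convert h using 1
    funext k
    simp only [Function.comp, wI, wF]
    have e : (((k + p : ℕ) : ℤ) - (k : ℤ)) = (p : ℤ) := by push_cast; ring
    rw [e, mul_comm ((k + p).factorial : ℝ), show k + p + k = 2 * k + p by ring]
  have fJ : ∀ p : ℕ, HasSum (fun k => (wF lam x ∘ wJ) (p, k))
      (besselB (p + 1) lam * -(Chebyshev.U ℝ ((p : ℤ) - 1)).eval x) := by
    intro p
    have h : HasSum _ (besselB (p + 1) lam * _) := (besselB_summable lam (p + 1)).hasSum.mul_right
      (-(Chebyshev.U ℝ ((p : ℤ) - 1)).eval x)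
    convert h using 1
    funext k
    simp only [Function.comp, wJ, wF]
    have e : ((k : ℤ) - ((k + (p + 1) : ℕ) : ℤ)) = -(p : ℤ) - 1 := by push_cast; ring
    rw [e, Chebyshev.U_neg_sub_one, eval_neg, show k + (k + (p + 1)) = 2 * k + (p + 1) by ring]
  have gI := sI.hasSum.prod_fiberwise fI
  have gJ := (hasSum_nat_add_iff' 1).mpr (sJ.hasSum.prod_fiberwise fJ)
  have := gI.add gJ
  simp only [Finset.sum_range_one, Nat.cast_zero, zero_sub, Chebyshev.U_neg_one, eval_zero,
    neg_zero, mul_zero, sub_zero] at this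
  rw [hadd] at this
  convert this using 2 with p
  have e : (((p + 1 : ℕ) : ℤ) - 1) = (p : ℤ) := by push_cast; ring
  rw [e]
  ring


/-- Character expansion of the quasi-coherent weave function:
`exp(2λx) = ∑ₚ (I_p(2λ) − I_{p+2}(2λ)) U_p(x)` with `U_p` the Chebyshev polynomials of
the second kind, the series converging absolutely. -/
theorem stmt_12 :
    ∀ lam x : ℝ,
      Summable (fun p : ℕ =>
        |(besselB p lam - besselB (p + 2) lam) *
          (Polynomial.Chebyshev.U ℝ (p : ℤ)).eval x|) ∧
      Real.exp (2 * lam * x) =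
        ∑' p : ℕ,
          (besselB p lam - besselB (p + 2) lam) *
            (Polynomial.Chebyshev.U ℝ (p : ℤ)).eval x := by
  intro lam x
  have h := stmt_aux lam x
  exact ⟨h.summable.abs, h.tsum_eq.symm⟩
end
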